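/- For all positive semidefinite n×n complex matrices A and B, tr(|AB|^{1/2}) ≤ (tr(A) · tr(B))^{1/2} ≤ (1/2)(tr(A) + tr(B)). -/

import Mathlib

open scoped ComplexOrder

/-- The absolute value `|Z| = (Zᴴ Z)^(1/2)` of a square complex matrix. -/
noncomputable def matAbs {n : ℕ} (Z : Matrix (Fin n) (Fin n) ℂ) : Matrix (Fin n) (Fin n) ℂ :=
  (Matrix.posSemidef_conjTranspose_mul_self Z).isHermitian.cfc Real.sqrt

/-- Real powers of a positive semidefinite (in particular, Hermitian) matrix, obtained by
applying `t ↦ t ^ r` to the eigenvalues; junk value `0` on non-Hermitian matrices. -/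
noncomputable def matRpow {n : ℕ} (A : Matrix (Fin n) (Fin n) ℂ) (r : ℝ) :
    Matrix (Fin n) (Fin n) ℂ :=
  if hA : A.IsHermitian then hA.cfc (fun t => t ^ r) else 0

theorem core_bessel {E : Type*} [NormedAddCommGroup E] [InnerProductSpace ℂ E]
    [FiniteDimensional ℂ E] {n : ℕ} (v : OrthonormalBasis (Fin n) ℂ E) (X : E →ₗ[ℂ] E)
    {ι : Type*} [Fintype ι] (u : ι → E) (hu : Orthonormal ℂ u) :
    ∑ j, ‖X (u j)‖ ^ 2 ≤ ∑ j, ‖X (v j)‖ ^ 2 := by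
  have h1 : ∀ x, ‖X x‖ ^ 2 = ∑ k, ‖inner ℂ x (X.adjoint (v k))‖ ^ 2 := by
    intro x
    rw [← v.sum_sq_norm_inner_right (X x)]
    refine Finset.sum_congr rfl fun k _ => ?_
    rw [LinearMap.adjoint_inner_right, norm_inner_symm]
  calc ∑ j, ‖X (u j)‖ ^ 2 = ∑ k, ∑ j, ‖inner ℂ (u j) (X.adjoint (v k))‖ ^ 2 := by
        simp_rw [h1]; exact Finset.sum_comm
    _ ≤ ∑ k, ‖X.adjoint (v k)‖ ^ 2 :=
        Finset.sum_le_sum fun k _ => hu.sum_inner_products_le _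
    _ = ∑ k, ∑ j, ‖inner ℂ (v j) (X.adjoint (v k))‖ ^ 2 := by
        simp_rw [v.sum_sq_norm_inner_right]
    _ = ∑ j, ‖X (v j)‖ ^ 2 := by
        simp_rw [h1]; exact Finset.sum_comm

theorem core_ineq {E : Type*} [NormedAddCommGroup E] [InnerProductSpace ℂ E]
    [FiniteDimensional ℂ E] {n : ℕ} (v : OrthonormalBasis (Fin n) ℂ E) (a b X Y : E →ₗ[ℂ] E)
    (ha : ∀ x y, inner ℂ x (a y) = inner ℂ (X x) (X y))
    (hb : ∀ x y, inner ℂ x (b y) = inner ℂ (Y x) (Y y))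
    (s : Fin n → ℝ) (hs : ∀ j, 0 ≤ s j)
    (hv : ∀ j, b (a (a (b (v j)))) = ((s j ^ 2 : ℝ) : ℂ) • v j) :
    ∑ j, √(s j) ≤ √((∑ j, ‖X (v j)‖ ^ 2) * (∑ j, ‖Y (v j)‖ ^ 2)) := by
  have ha' : ∀ x y, inner ℂ (a x) y = inner ℂ x (a y) := by
    intro x y
    rw [← inner_conj_symm, ha, inner_conj_symm, ha]
  have hb' : ∀ x y, inner ℂ (b x) y = inner ℂ x (b y) := by
    intro x y
    rw [← inner_conj_symm, hb, inner_conj_symm, hb]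
  set u : Fin n → E := fun j => ((s j : ℂ)⁻¹) • a (b (v j)) with hu
  have hon : Orthonormal ℂ (fun j : {j // s j ≠ 0} => u j) := by
    rw [orthonormal_iff_ite]
    rintro ⟨i, hi⟩ ⟨j, hj⟩
    have hj' : (s j : ℂ) ≠ 0 := by exact_mod_cast hj
    simp only [hu, inner_smul_left, inner_smul_right, ha', hb', hv,
      orthonormal_iff_ite.mp v.orthonormal, Subtype.mk.injEq]
    split_ifs with h
    · subst h
      simp
      field_simp
    · simp
  have hX : ∑ j, ‖X (u j)‖ ^ 2 ≤ ∑ j, ‖X (v j)‖ ^ 2 := by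
    refine le_trans (le_of_eq ?_) (core_bessel v X _ hon)
    classical
    rw [← Finset.sum_subtype (Finset.univ.filter fun j => s j ≠ 0) (by simp)
      (fun j => ‖X (u j)‖ ^ 2)]
    symm
    apply Finset.sum_subset (Finset.subset_univ _)
    intro j _ hj
    have : s j = 0 := by simpa using hj
    simp [hu, this]
  have hpt : ∀ j, s j ≤ ‖Y (v j)‖ ^ 2 * (‖X (u j)‖ * ‖X (v j)‖) := by
    intro j
    rcases (hs j).eq_or_lt with h0 | hpos
    · rw [← h0]; positivity
    have hj' : (s j : ℂ) ≠ 0 := by exact_mod_cast hpos.ne'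
    have hbw : b (a (u j)) = (s j : ℂ) • v j := by
      simp only [hu, map_smul, hv, smul_smul]
      congr 1
      push_cast
      field_simp
    have h1 : s j ≤ ‖Y (v j)‖ * ‖Y (a (u j))‖ := by
      have := norm_inner_le_norm (𝕜 := ℂ) (Y (v j)) (Y (a (u j)))
      rw [← hb, hbw, inner_smul_right, inner_self_eq_norm_sq_to_K] at this
      simpa [abs_of_pos hpos] using this
    have h2 : ‖Y (a (u j))‖ ^ 2 ≤ s j * (‖X (u j)‖ * ‖X (v j)‖) := by
      have h3 : (inner ℂ (Y (a (u j))) (Y (a (u j))) : ℂ) = s j * inner ℂ (X (u j)) (X (v j)) := by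
        rw [← hb, hbw, inner_smul_right, ha', ha]
      have h4 := congrArg norm h3
      rw [inner_self_eq_norm_sq_to_K] at h4
      have h5 := norm_inner_le_norm (𝕜 := ℂ) (X (u j)) (X (v j))
      have h6 : ‖Y (a (u j))‖ ^ 2 = s j * ‖(inner ℂ (X (u j)) (X (v j)) : ℂ)‖ := by
        simpa [abs_of_pos hpos] using h4
      rw [h6]
      gcongr
    have h7 : s j * s j ≤ s j * (‖Y (v j)‖ ^ 2 * (‖X (u j)‖ * ‖X (v j)‖)) := by
      calc s j * s j ≤ (‖Y (v j)‖ * ‖Y (a (u j))‖) * (‖Y (v j)‖ * ‖Y (a (u j))‖) := by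
            gcongr
        _ = ‖Y (v j)‖ ^ 2 * ‖Y (a (u j))‖ ^ 2 := by ring
        _ ≤ ‖Y (v j)‖ ^ 2 * (s j * (‖X (u j)‖ * ‖X (v j)‖)) := by gcongr
        _ = _ := by ring
    exact le_of_mul_le_mul_left h7 hpos
  have hq : ∑ j, ‖X (u j)‖ * ‖X (v j)‖ ≤ ∑ j, ‖X (v j)‖ ^ 2 := by
    have : ∀ j, ‖X (u j)‖ * ‖X (v j)‖ ≤ (‖X (u j)‖ ^ 2 + ‖X (v j)‖ ^ 2) / 2 := fun j => by
      nlinarith [sq_nonneg (‖X (u j)‖ - ‖X (v j)‖)]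
    have h := Finset.sum_le_sum fun j (_ : j ∈ Finset.univ) => this j
    rw [← Finset.sum_div, Finset.sum_add_distrib] at h
    linarith
  apply Real.le_sqrt_of_sq_le
  calc (∑ j, √(s j)) ^ 2 ≤ (∑ j, ‖Y (v j)‖ * √(‖X (u j)‖ * ‖X (v j)‖)) ^ 2 := by
        gcongr with j _
        rw [Real.sqrt_le_left (by positivity), mul_pow, Real.sq_sqrt (by positivity)]
        exact hpt j
    _ ≤ (∑ j, ‖Y (v j)‖ ^ 2) * ∑ j, √(‖X (u j)‖ * ‖X (v j)‖) ^ 2 :=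
        Finset.sum_mul_sq_le_sq_mul_sq _ _ _
    _ = (∑ j, ‖Y (v j)‖ ^ 2) * ∑ j, ‖X (u j)‖ * ‖X (v j)‖ := by
        congr 1
        exact Finset.sum_congr rfl fun j _ => Real.sq_sqrt (by positivity)
    _ ≤ (∑ j, ‖Y (v j)‖ ^ 2) * ∑ j, ‖X (v j)‖ ^ 2 := by gcongr
    _ = _ := mul_comm _ _

theorem trace_herm_cfc {n : ℕ} {H : Matrix (Fin n) (Fin n) ℂ} (hH : H.IsHermitian) (f : ℝ → ℝ) :
    (hH.cfc f).trace = ((∑ j, f (hH.eigenvalues j) : ℝ) : ℂ) := by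
  rw [Matrix.IsHermitian.cfc, Unitary.conjStarAlgAut_apply, Matrix.trace_mul_comm, ← mul_assoc]
  simp [Matrix.trace_diagonal]

theorem trace_lhs {n : ℕ} (Z : Matrix (Fin n) (Fin n) ℂ) :
    (matRpow (matAbs Z) (1 / 2)).trace = ((∑ j, √(√
      ((Matrix.posSemidef_conjTranspose_mul_self Z).isHermitian.eigenvalues j)) : ℝ) : ℂ) := by
  have hH := (Matrix.posSemidef_conjTranspose_mul_self Z).isHermitian
  have h1 : matAbs Z = cfc Real.sqrt (Z.conjTranspose * Z) := (hH.cfc_eq _).symm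
  have h2 : (matAbs Z).IsHermitian := by
    rw [h1]; exact cfc_predicate (p := IsSelfAdjoint) _ _
  rw [matRpow, dif_pos h2, ← h2.cfc_eq]
  have h3 : cfc (fun t : ℝ => t ^ (1 / 2 : ℝ)) (matAbs Z) = hH.cfc (fun t => √(√t)) := by
    rw [h1, ← hH.cfc_eq]
    have h4 := cfc_comp' (fun t : ℝ => t ^ (1 / 2 : ℝ)) Real.sqrt (Z.conjTranspose * Z)
      (Real.continuous_rpow_const (by norm_num)).continuousOn Real.continuous_sqrt.continuousOn hH
    simp_rw [← Real.sqrt_eq_rpow] at h4 ⊢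
    exact h4.symm
  rw [h3, trace_herm_cfc]

theorem inner_psd {n : ℕ} (X : Matrix (Fin n) (Fin n) ℂ) (x y : EuclideanSpace ℂ (Fin n)) :
    inner ℂ x ((X.conjTranspose * X).toEuclideanLin y) =
      inner ℂ (X.toEuclideanLin x) (X.toEuclideanLin y) := by
  rw [← LinearMap.adjoint_inner_right, ← Matrix.toEuclideanLin_conjTranspose_eq_adjoint,
    Matrix.toLpLin_mul_same]
  rfl

theorem trace_psd {n : ℕ} (X : Matrix (Fin n) (Fin n) ℂ)
    (v : OrthonormalBasis (Fin n) ℂ (EuclideanSpace ℂ (Fin n))) :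
    (X.conjTranspose * X).trace = ((∑ j, ‖X.toEuclideanLin (v j)‖ ^ 2 : ℝ) : ℂ) := by
  have h1 : (X.conjTranspose * X).trace =
      LinearMap.trace ℂ _ ((X.conjTranspose * X).toEuclideanLin) := by
    rw [Matrix.toEuclideanLin_eq_toLin_orthonormal, Matrix.trace_toLin_eq]
  rw [h1, LinearMap.trace_eq_sum_inner _ v]
  simp_rw [inner_psd, inner_self_eq_norm_sq_to_K]
  simp

/-- **Matrix arithmetic–geometric mean inequality in traces.** -/
theorem matrix_am_gm {n : ℕ} (A B : Matrix (Fin n) (Fin n) ℂ)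
    (hA : A.PosSemidef) (hB : B.PosSemidef) :
    (matRpow (matAbs (A * B)) (1 / 2)).trace ≤ (A.trace * B.trace) ^ ((1 : ℂ) / 2) ∧
      (A.trace * B.trace) ^ ((1 : ℂ) / 2) ≤ (1 / 2 : ℂ) * (A.trace + B.trace) := by
  have hP := Matrix.posSemidef_conjTranspose_mul_self (A * B)
  obtain ⟨X, hX⟩ : ∃ X : Matrix (Fin n) (Fin n) ℂ, A = X.conjTranspose * X := by
    open scoped MatrixOrder in
    exact CStarAlgebra.nonneg_iff_eq_star_mul_self.mp hA.nonneg
  obtain ⟨Y, hY⟩ : ∃ Y : Matrix (Fin n) (Fin n) ℂ, B = Y.conjTranspose * Y := by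
    open scoped MatrixOrder in
    exact CStarAlgebra.nonneg_iff_eq_star_mul_self.mp hB.nonneg
  set v := hP.isHermitian.eigenvectorBasis with hvdef
  have htA := trace_psd X v
  have htB := trace_psd Y v
  rw [← hX] at htA
  rw [← hY] at htB
  have key := core_ineq v A.toEuclideanLin B.toEuclideanLin X.toEuclideanLin Y.toEuclideanLin
    (fun x y => by rw [hX]; exact inner_psd X x y) (fun x y => by rw [hY]; exact inner_psd Y x y)
    (fun j => √(hP.isHermitian.eigenvalues j)) (fun j => Real.sqrt_nonneg _)
    (fun j => by
      rw [Real.sq_sqrt (hP.eigenvalues_nonneg j)]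
      have h := hP.isHermitian.mulVec_eigenvectorBasis j
      apply (WithLp.ofLp_injective 2)
      have e : (A * B).conjTranspose * (A * B) = B * (A * (A * B)) := by
        rw [Matrix.conjTranspose_mul, hA.isHermitian.eq, hB.isHermitian.eq, Matrix.mul_assoc]
      have e2 : B.toEuclideanLin (A.toEuclideanLin (A.toEuclideanLin (B.toEuclideanLin (v j)))) =
          WithLp.toLp 2 ((B * (A * (A * B))).mulVec (v j).ofLp) := by
        simp only [Matrix.toLpLin_apply, Matrix.mulVec_mulVec]
      rw [e2, ← e]
      exact h)
  set α := ∑ j, ‖X.toEuclideanLin (v j)‖ ^ 2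
  set β := ∑ j, ‖Y.toEuclideanLin (v j)‖ ^ 2
  have hα : 0 ≤ α := Finset.sum_nonneg fun _ _ => by positivity
  have hβ : 0 ≤ β := Finset.sum_nonneg fun _ _ => by positivity
  have hpow : (A.trace * B.trace) ^ ((1 : ℂ) / 2) = ((√(α * β) : ℝ) : ℂ) := by
    rw [htA, htB, Real.sqrt_eq_rpow, Complex.ofReal_cpow (mul_nonneg hα hβ)]
    push_cast
    rfl
  rw [hpow, trace_lhs, htA, htB]
  constructor
  · exact_mod_cast key
  · have : √(α * β) ≤ 1 / 2 * (α + β) := by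
      rw [Real.sqrt_le_left (by positivity)]
      nlinarith [sq_nonneg (α - β)]
    have h2 := Complex.real_le_real.mpr this
    push_cast at h2 ⊢
    exact h2
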